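/- Integral representation of the corridor term: fix x > 0 and a subset C ⊆ B of bonds, and for t ∈ [0,1] set x_b(t) = x√t for b ∈ C and x_b(t) = x for b ∉ C; let P(t) denote the quenched pressure with parameters {x_b(t)}. Then P(1) − P(0) = |C| (x²/2) (1 + ∫₀¹ [⟨S_C⟩_t]_t dt), where S_C = |C|^{−1} Σ_{b∈C} S_b and the subscript t indicates evaluation at parameters {x_b(t)}. (Note P(1) is the pressure of the full system with all parameters equal to x, and P(0) is the pressure of the system with the corridor bonds removed.) -/

import Mathlib

open MeasureTheory ProbabilityTheory Filter

noncomputable section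

/-- The real value ±1 of a Boolean spin. -/
def spin (s : Bool) : ℝ := if s then 1 else -1

/-- The bond spin `S_b = S_n S_{n'}` for a bond `b` with endpoints `ep b = (n, n')`. -/
def bondSpin {V ι : Type*} (ep : ι → V × V) (S : V → Bool) (b : ι) : ℝ :=
  spin (S (ep b).1) * spin (S (ep b).2)

/-- The potential `U(j, S) = Σ_b x_b j_b S_b`. -/
def potential {V ι : Type*} [Fintype ι] (ep : ι → V × V) (x j : ι → ℝ)
    (S : V → Bool) : ℝ :=
  ∑ b, x b * j b * bondSpin ep S b

/-- The partition function `Z(j) = Σ_S exp U(j,S)`. -/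
def partitionFn {V ι : Type*} [Fintype V] [DecidableEq V] [Fintype ι]
    (ep : ι → V × V) (x j : ι → ℝ) : ℝ :=
  ∑ S : V → Bool, Real.exp (potential ep x j S)

/-- The Boltzmann–Gibbs expectation `⟨f⟩` at fixed disorder `j`. -/
def gibbs {V ι : Type*} [Fintype V] [DecidableEq V] [Fintype ι]
    (ep : ι → V × V) (x j : ι → ℝ) (f : (V → Bool) → ℝ) : ℝ :=
  (∑ S : V → Bool, f S * Real.exp (potential ep x j S)) / partitionFn ep x j

/-- The law of the couplings: independent Gaussians, `j_b` of mean `x_b` and variance 1. -/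
def couplings {ι : Type*} [Fintype ι] (x : ι → ℝ) : Measure (ι → ℝ) :=
  Measure.pi fun b => gaussianReal (x b) 1

/-- The quenched average `[F]`. -/
def quenched {ι : Type*} [Fintype ι] (x : ι → ℝ) (F : (ι → ℝ) → ℝ) : ℝ :=
  ∫ j, F j ∂(couplings x)

/-- The quenched pressure `P({x}) = [ln Z]`. -/
def pressure {V ι : Type*} [Fintype V] [DecidableEq V] [Fintype ι]
    (ep : ι → V × V) (x : ι → ℝ) : ℝ :=
  quenched x fun j => Real.log (partitionFn ep x j)

/-!
Writing `j_b = x_b + g_b` with `g` standard Gaussian, `∂P/∂x_b = [(j_b + x_b) ⟨S_b⟩]`. Gaussian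
integration by parts turns this into `x_b (1 - [⟨S_b⟩²] + 2 [⟨S_b⟩])`, and the Nishimori identity
`[⟨S_b⟩²] = [⟨S_b⟩]` into `x_b (1 + [⟨S_b⟩])`. Along `x_b(t) = x_b √t` the factor
`x_b(t) x_b'(t) = x_b² / 2` does not depend on `t`, and the representation is the fundamental
theorem of calculus.

The Nishimori identity is Bayes' rule. Let a hidden configuration `T` be uniform, and given `T` let
the couplings have means `T_b x_b`. The density of `j` given `T` is proportional, with a factor
independent of `T`, to `exp U(j, T)`, so the Gibbs measure is the posterior law of `T` given `j` and
`⟨S_b⟩` is the posterior mean of `T_b`; hence `E ⟨S_b⟩² = E (⟨S_b⟩ T_b)`. Flipping the spins of `T`,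
a gauge symmetry of the model, brings both sides back to couplings of means `x_b`.
-/

lemma norm_sum_smul_proj_le {ι : Type*} [Fintype ι] (c : ι → ℝ) :
    ‖∑ b, c b • ContinuousLinearMap.proj (R := ℝ) (φ := fun _ : ι => ℝ) b‖ ≤ ∑ b, |c b| := by
  refine norm_sum_le_of_le _ fun b _ => ?_
  rw [norm_smul, Real.norm_eq_abs]
  refine mul_le_of_le_one_right (abs_nonneg _) ?_
  exact ContinuousLinearMap.opNorm_le_bound _ zero_le_one fun j => by
    simpa using norm_le_pi_norm j b

section Gaussian

variable {ι : Type*} [Fintype ι]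

lemma pi_withDensity_ofReal {α : ι → Type*} [∀ i, MeasurableSpace (α i)]
    (μ : ∀ i, Measure (α i)) [∀ i, SigmaFinite (μ i)] {f : ∀ i, α i → ℝ}
    (hf_nonneg : ∀ i a, 0 ≤ f i a) (hf : ∀ i, Integrable (f i) (μ i)) :
    Measure.pi (fun i => (μ i).withDensity fun a => ENNReal.ofReal (f i a)) =
      (Measure.pi μ).withDensity fun a => ENNReal.ofReal (∏ i, f i (a i)) := by
  have := fun i => isFiniteMeasure_withDensity_ofReal (hf i).2
  refine Measure.pi_eq fun s hs => ?_
  rw [withDensity_apply _ (.univ_pi hs), Measure.restrict_pi_pi,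
    ← ofReal_integral_eq_lintegral_ofReal
      (Integrable.fintype_prod_dep fun i => (hf i).restrict)
      (.of_forall fun a => Finset.prod_nonneg fun i _ => hf_nonneg i (a i)),
    integral_fintype_prod_eq_prod,
    ENNReal.ofReal_prod_of_nonneg fun i _ => integral_nonneg (hf_nonneg i)]
  refine Finset.prod_congr rfl fun i _ => ?_
  rw [withDensity_apply _ (hs i), ofReal_integral_eq_lintegral_ofReal (hf i).restrict
    (.of_forall (hf_nonneg i))]

lemma measurePreserving_update_pi [DecidableEq ι] {α : ι → Type*} [∀ i, MeasurableSpace (α i)]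
    (μ : ∀ i, Measure (α i)) [∀ i, IsProbabilityMeasure (μ i)] (i : ι) :
    MeasurePreserving (fun p : (∀ i, α i) × α i => Function.update p.1 i p.2)
      ((Measure.pi μ).prod (μ i)) (Measure.pi μ) := by
  have h_meas : Measurable fun p : (∀ i, α i) × α i => Function.update p.1 i p.2 :=
    measurable_pi_iff.2 fun k => by
      obtain rfl | hk := eq_or_ne k i
      · simpa only [Function.update_self] using measurable_snd
      · simp only [Function.update_of_ne hk]
        fun_prop
  refine ⟨h_meas, (Measure.pi_eq fun s hs => ?_).symm⟩
  have h_preimage : (fun p : (∀ i, α i) × α i => Function.update p.1 i p.2) ⁻¹' Set.univ.pi s =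
      Set.univ.pi (Function.update s i Set.univ) ×ˢ s i := by
    ext p
    simp only [Set.mem_preimage, Set.mem_univ_pi, Set.mem_prod]
    rw [Function.forall_update_iff p.1 (p := fun k a => a ∈ s k),
      Function.forall_update_iff s (p := fun k t => p.1 k ∈ t)]
    simp [and_comm]
  rw [Measure.map_apply h_meas (.univ_pi hs), h_preimage, Measure.prod_prod, Measure.pi_pi,
    ← Finset.prod_erase_mul _ _ (Finset.mem_univ i),
    ← Finset.prod_erase_mul (f := fun k => μ k (s k)) _ (Finset.mem_univ i)]
  simp only [Function.update_self, measure_univ, mul_one]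
  congr 1
  refine Finset.prod_congr rfl fun k hk => ?_
  rw [Function.update_of_ne (Finset.ne_of_mem_erase hk)]

lemma integral_pi_eq_integral_integral_update [DecidableEq ι] {α : ι → Type*}
    [∀ i, MeasurableSpace (α i)] (μ : ∀ i, Measure (α i)) [∀ i, IsProbabilityMeasure (μ i)] (i : ι)
    {E : Type*} [NormedAddCommGroup E] [NormedSpace ℝ E] {f : (∀ i, α i) → E}
    (hf : Integrable f (Measure.pi μ)) :
    ∫ a, f a ∂Measure.pi μ = ∫ a, ∫ t, f (Function.update a i t) ∂μ i ∂Measure.pi μ := by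
  have h_update := measurePreserving_update_pi μ i
  conv_lhs => rw [← h_update.map_eq]
  rw [integral_map h_update.measurable.aemeasurable (h_update.map_eq.symm ▸ hf.1)]
  exact integral_prod _ (h_update.integrable_comp_of_integrable hf)

lemma gaussianPDFReal_eq_centered_mul_exp (m x : ℝ) (v : NNReal) :
    gaussianPDFReal m v x = gaussianPDFReal 0 v x * Real.exp ((m * x - m ^ 2 / 2) / v) := by
  rw [gaussianPDFReal, gaussianPDFReal, mul_assoc (√(2 * Real.pi * v))⁻¹, ← Real.exp_add]
  congr 2
  ring

lemma hasDerivAt_gaussianPDFReal (m x : ℝ) (v : NNReal) :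
    HasDerivAt (gaussianPDFReal m v) (-((x - m) / v) * gaussianPDFReal m v x) x := by
  have h_exponent : HasDerivAt (fun x => -(x - m) ^ 2 / (2 * v)) (-((x - m) / v)) x :=
    ((((hasDerivAt_id x).sub_const m).pow 2).neg.div_const (2 * (v : ℝ))).congr_deriv (by
      simp; ring)
  refine (h_exponent.exp.const_mul (√(2 * Real.pi * v))⁻¹).congr_deriv ?_
  rw [gaussianPDFReal]
  ring

lemma integrable_gaussianReal_iff {m : ℝ} {v : NNReal} (hv : v ≠ 0) {f : ℝ → ℝ} :
    Integrable f (gaussianReal m v) ↔ Integrable fun x => gaussianPDFReal m v x * f x := by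
  rw [gaussianReal_of_var_ne_zero m hv,
    integrable_withDensity_iff_integrable_smul' (measurable_gaussianPDF m v)
      (.of_forall fun _ => gaussianPDF_lt_top)]
  simp only [toReal_gaussianPDF, smul_eq_mul]

lemma stein_identity_gaussianReal {m : ℝ} {v : NNReal} {f f' : ℝ → ℝ}
    (hf : ∀ x, HasDerivAt f (f' x) x) (hf_int : Integrable f (gaussianReal m v))
    (hf'_int : Integrable f' (gaussianReal m v))
    (hxf_int : Integrable (fun x => (x - m) * f x) (gaussianReal m v)) :
    ∫ x, (x - m) * f x ∂gaussianReal m v = v * ∫ x, f' x ∂gaussianReal m v := by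
  obtain rfl | hv := eq_or_ne v 0
  · simp
  have hv' : (v : ℝ) ≠ 0 := mod_cast hv
  have h_score : ∀ x, gaussianPDFReal m v x * ((x - m) * f x) =
      -v * (-((x - m) / v) * gaussianPDFReal m v x * f x) := fun x => by field_simp
  rw [integrable_gaussianReal_iff hv] at hf_int hf'_int hxf_int
  simp only [h_score] at hxf_int
  have h_parts := integral_mul_deriv_eq_deriv_mul_of_integrable
    (fun x _ => hasDerivAt_gaussianPDFReal m x v) (fun x _ => hf x) hf'_int
    ((integrable_const_mul_iff (by simpa using hv) _).1 hxf_int) hf_int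
  simp only [integral_gaussianReal_eq_integral_smul hv, smul_eq_mul, h_score,
    integral_const_mul, h_parts]
  ring

lemma stein_identity_pi_gaussianReal [DecidableEq ι] {m : ι → ℝ} {v : ι → NNReal} (i : ι)
    {f f' : (ι → ℝ) → ℝ}
    (hf : ∀ a t, HasDerivAt (fun t => f (Function.update a i t)) (f' (Function.update a i t)) t)
    (hf_int : Integrable f (Measure.pi fun k => gaussianReal (m k) (v k)))
    (hf'_int : Integrable f' (Measure.pi fun k => gaussianReal (m k) (v k)))
    (haf_int : Integrable (fun a => (a i - m i) * f a)
      (Measure.pi fun k => gaussianReal (m k) (v k))) :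
    ∫ a, (a i - m i) * f a ∂Measure.pi (fun k => gaussianReal (m k) (v k)) =
      v i * ∫ a, f' a ∂Measure.pi (fun k => gaussianReal (m k) (v k)) := by
  have h_update := measurePreserving_update_pi (fun k => gaussianReal (m k) (v k)) i
  rw [integral_pi_eq_integral_integral_update _ i haf_int,
    integral_pi_eq_integral_integral_update _ i hf'_int, ← integral_const_mul]
  refine integral_congr_ae ?_
  filter_upwards [(h_update.integrable_comp_of_integrable hf_int).prod_right_ae,
    (h_update.integrable_comp_of_integrable hf'_int).prod_right_ae,
    (h_update.integrable_comp_of_integrable haf_int).prod_right_ae] with a ha ha' haa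
  simp only [Function.comp_apply, Function.update_self] at haa ⊢
  exact stein_identity_gaussianReal (hf a) ha ha' haa

end Gaussian

section BondSpin

variable {V ι : Type*} (ep : ι → V × V)

lemma spin_mul_self (s : Bool) : spin s * spin s = 1 := by cases s <;> norm_num [spin]

-- The sum of Booleans is `xor` and `true` is the spin `+1`, whence the sign; it cancels on bonds.
lemma spin_add (s t : Bool) : spin (s + t) = -(spin s * spin t) := by
  cases s <;> cases t <;> norm_num [spin, Bool.add_eq_xor]

lemma bondSpin_mul_self (S : V → Bool) (b : ι) : bondSpin ep S b * bondSpin ep S b = 1 := by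
  rw [bondSpin, mul_mul_mul_comm, spin_mul_self, spin_mul_self, one_mul]

lemma abs_bondSpin (S : V → Bool) (b : ι) : |bondSpin ep S b| = 1 := by
  rcases mul_self_eq_one_iff.1 (bondSpin_mul_self ep S b) with h | h <;> simp [h]

lemma bondSpin_add (S T : V → Bool) (b : ι) :
    bondSpin ep (S + T) b = bondSpin ep S b * bondSpin ep T b := by
  simp only [bondSpin, Pi.add_apply, spin_add]
  ring

end BondSpin

section Gibbs

variable {V ι : Type*} [Fintype V] [DecidableEq V] [Fintype ι] (ep : ι → V × V)

lemma partitionFn_pos (y j : ι → ℝ) : 0 < partitionFn ep y j :=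
  Finset.sum_pos (fun _ _ => Real.exp_pos _) Finset.univ_nonempty

lemma exp_potential_le_partitionFn (y j : ι → ℝ) (S : V → Bool) :
    Real.exp (potential ep y j S) ≤ partitionFn ep y j :=
  Finset.single_le_sum (f := fun S => Real.exp (potential ep y j S))
    (fun _ _ => (Real.exp_pos _).le) (Finset.mem_univ S)

lemma partitionFn_mul_gibbs (y j : ι → ℝ) (f : (V → Bool) → ℝ) :
    partitionFn ep y j * gibbs ep y j f = ∑ S, f S * Real.exp (potential ep y j S) :=
  mul_div_cancel₀ _ (partitionFn_pos ep y j).ne'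

lemma gibbs_const_mul (y j : ι → ℝ) (c : ℝ) (f : (V → Bool) → ℝ) :
    gibbs ep y j (fun S => c * f S) = c * gibbs ep y j f := by
  simp only [gibbs, mul_assoc, ← Finset.mul_sum, mul_div_assoc]

lemma gibbs_finsetSum {κ : Type*} (y j : ι → ℝ) (s : Finset κ) (f : κ → (V → Bool) → ℝ) :
    gibbs ep y j (fun S => ∑ k ∈ s, f k S) = ∑ k ∈ s, gibbs ep y j (f k) := by
  simp only [gibbs, ← Finset.sum_div, Finset.sum_mul]
  rw [Finset.sum_comm]

lemma gibbs_one (y j : ι → ℝ) : gibbs ep y j (fun _ => 1) = 1 := by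
  simp only [gibbs, one_mul]
  exact div_self (partitionFn_pos ep y j).ne'

lemma abs_gibbs_le (y j : ι → ℝ) {f : (V → Bool) → ℝ} {c : ℝ} (hf : ∀ S, |f S| ≤ c) :
    |gibbs ep y j f| ≤ c := by
  rw [gibbs, abs_div, abs_of_pos (partitionFn_pos ep y j), div_le_iff₀ (partitionFn_pos ep y j),
    partitionFn, Finset.mul_sum]
  refine (Finset.abs_sum_le_sum_abs _ _).trans (Finset.sum_le_sum fun S _ => ?_)
  rw [abs_mul, Real.abs_exp]
  exact mul_le_mul_of_nonneg_right (hf S) (Real.exp_pos _).le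

lemma abs_gibbs_bondSpin_le_one (y j : ι → ℝ) (b : ι) :
    |gibbs ep y j (bondSpin ep · b)| ≤ 1 :=
  abs_gibbs_le ep y j fun S => (abs_bondSpin ep S b).le

omit [Fintype V] [DecidableEq V] in
lemma abs_potential_le (y j : ι → ℝ) (S : V → Bool) :
    |potential ep y j S| ≤ ∑ b, |y b * j b| := by
  refine (Finset.abs_sum_le_sum_abs _ _).trans_eq ?_
  simp only [abs_mul _ (bondSpin _ _ _), abs_bondSpin, mul_one]

lemma abs_log_partitionFn_le (y j : ι → ℝ) :
    |Real.log (partitionFn ep y j)| ≤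
      Real.log (Fintype.card (V → Bool)) + ∑ b, |y b * j b| := by
  set A := ∑ b, |y b * j b|
  have h_potential : ∀ S, |potential ep y j S| ≤ A := abs_potential_le ep y j
  have h_card : (1 : ℝ) ≤ Fintype.card (V → Bool) := mod_cast Fintype.card_pos
  have h_upper : partitionFn ep y j ≤ Fintype.card (V → Bool) * Real.exp A := by
    rw [← nsmul_eq_mul, ← Finset.card_univ]
    exact Finset.sum_le_card_nsmul _ _ _ fun S _ =>
      Real.exp_le_exp.2 (abs_le.1 (h_potential S)).2
  have h_lower : Real.exp (-A) ≤ partitionFn ep y j :=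
    (Real.exp_le_exp.2 (abs_le.1 (h_potential fun _ => true)).1).trans
      (exp_potential_le_partitionFn ep y j _)
  have h_log_upper := Real.log_le_log (partitionFn_pos ep y j) h_upper
  have h_log_lower := Real.log_le_log (Real.exp_pos _) h_lower
  rw [Real.log_mul (by positivity) (Real.exp_pos _).ne', Real.log_exp] at h_log_upper
  rw [Real.log_exp] at h_log_lower
  exact abs_le.2 ⟨by linarith [Real.log_nonneg h_card], h_log_upper⟩

section Continuity

variable {X : Type*} [TopologicalSpace X] {y j : X → ι → ℝ}

omit [Fintype V] [DecidableEq V] in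
@[fun_prop]
lemma continuous_potential (hy : Continuous y) (hj : Continuous j) (S : V → Bool) :
    Continuous fun p => potential ep (y p) (j p) S := by
  unfold potential
  fun_prop

@[fun_prop]
lemma continuous_partitionFn (hy : Continuous y) (hj : Continuous j) :
    Continuous fun p => partitionFn ep (y p) (j p) := by
  unfold partitionFn
  fun_prop

@[fun_prop]
lemma continuous_log_partitionFn (hy : Continuous y) (hj : Continuous j) :
    Continuous fun p => Real.log (partitionFn ep (y p) (j p)) :=
  (continuous_partitionFn ep hy hj).log fun _ => (partitionFn_pos ep _ _).ne'

@[fun_prop]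
lemma continuous_gibbs (hy : Continuous y) (hj : Continuous j) (f : (V → Bool) → ℝ) :
    Continuous fun p => gibbs ep (y p) (j p) f :=
  .div (by fun_prop) (by fun_prop) fun _ => (partitionFn_pos ep _ _).ne'

end Continuity

section Derivatives

variable {E : Type*} [NormedAddCommGroup E] [NormedSpace ℝ E] {y j : E → ι → ℝ}
  {h' : ι → E →L[ℝ] ℝ} {p : E}

lemma hasFDerivAt_sum_mul_exp_potential (h : ∀ b, HasFDerivAt (fun p => y p b * j p b) (h' b) p)
    (f : (V → Bool) → ℝ) :
    HasFDerivAt (fun p => ∑ S, f S * Real.exp (potential ep (y p) (j p) S))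
      (partitionFn ep (y p) (j p) •
        ∑ b, gibbs ep (y p) (j p) (fun S => f S * bondSpin ep S b) • h' b) p := by
  have h_potential : ∀ S, HasFDerivAt (fun p => potential ep (y p) (j p) S)
      (∑ b, bondSpin ep S b • h' b) p := fun S =>
    HasFDerivAt.fun_sum fun b _ => (h b).mul_const _
  refine (HasFDerivAt.fun_sum fun S _ => (h_potential S).exp.const_mul (f S)).congr_fderiv ?_
  simp only [Finset.smul_sum, smul_smul, partitionFn_mul_gibbs, Finset.sum_smul]
  rw [Finset.sum_comm]
  refine Finset.sum_congr rfl fun b _ => Finset.sum_congr rfl fun S _ => ?_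
  congr 1
  ring

lemma hasFDerivAt_partitionFn (h : ∀ b, HasFDerivAt (fun p => y p b * j p b) (h' b) p) :
    HasFDerivAt (fun p => partitionFn ep (y p) (j p))
      (partitionFn ep (y p) (j p) • ∑ b, gibbs ep (y p) (j p) (bondSpin ep · b) • h' b) p := by
  simpa only [partitionFn, one_mul] using hasFDerivAt_sum_mul_exp_potential ep h fun _ => 1

lemma hasFDerivAt_log_partitionFn (h : ∀ b, HasFDerivAt (fun p => y p b * j p b) (h' b) p) :
    HasFDerivAt (fun p => Real.log (partitionFn ep (y p) (j p)))
      (∑ b, gibbs ep (y p) (j p) (bondSpin ep · b) • h' b) p := by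
  have h_pos := partitionFn_pos ep (y p) (j p)
  refine ((hasFDerivAt_partitionFn ep h).log h_pos.ne').congr_fderiv ?_
  rw [inv_smul_smul₀ h_pos.ne']

lemma hasFDerivAt_gibbs (h : ∀ b, HasFDerivAt (fun p => y p b * j p b) (h' b) p)
    (f : (V → Bool) → ℝ) :
    HasFDerivAt (fun p => gibbs ep (y p) (j p) f)
      (∑ b, gibbs ep (y p) (j p) (fun S => f S * bondSpin ep S b) • h' b -
        gibbs ep (y p) (j p) f • ∑ b, gibbs ep (y p) (j p) (bondSpin ep · b) • h' b) p := by
  have h_pos := partitionFn_pos ep (y p) (j p)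
  have h_gibbs : (fun p => gibbs ep (y p) (j p) f) = fun p =>
      (∑ S, f S * Real.exp (potential ep (y p) (j p) S)) * (partitionFn ep (y p) (j p))⁻¹ :=
    funext fun p => div_eq_mul_inv _ _
  rw [h_gibbs]
  refine ((hasFDerivAt_sum_mul_exp_potential ep h f).fun_mul
    ((hasDerivAt_inv h_pos.ne').comp_hasFDerivAt p (hasFDerivAt_partitionFn ep h))).congr_fderiv ?_
  rw [← partitionFn_mul_gibbs]
  simp only [Function.comp_apply]
  match_scalars <;> field_simp

lemma hasDerivAt_gibbs_update [DecidableEq ι] (y j : ι → ℝ) (b : ι) (t : ℝ) (f : (V → Bool) → ℝ) :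
    HasDerivAt (fun t => gibbs ep y (Function.update j b t) f)
      (y b * (gibbs ep y (Function.update j b t) (fun S => f S * bondSpin ep S b) -
        gibbs ep y (Function.update j b t) f *
          gibbs ep y (Function.update j b t) (bondSpin ep · b))) t := by
  have h_coord : ∀ k, HasFDerivAt (fun j : ι → ℝ => y k * j k)
      (y k • ContinuousLinearMap.proj (R := ℝ) (φ := fun _ : ι => ℝ) k)
      (Function.update j b t) := fun k =>
    (hasFDerivAt_apply k _).const_mul _
  refine ((hasFDerivAt_gibbs ep h_coord f).comp_hasDerivAt t
    (hasDerivAt_update j b t)).congr_deriv ?_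
  simp [Pi.single_apply]
  ring

end Derivatives

end Gibbs

section Gauge

variable {V ι : Type*} [Fintype ι] (ep : ι → V × V)

lemma potential_bondSpin_mul (y j : ι → ℝ) (S T : V → Bool) :
    potential ep y (bondSpin ep T * j) S = potential ep y j (S + T) := by
  simp only [potential, bondSpin_add, Pi.mul_apply]
  exact Finset.sum_congr rfl fun b _ => by ring

variable [Fintype V] [DecidableEq V]

lemma partitionFn_bondSpin_mul (y j : ι → ℝ) (T : V → Bool) :
    partitionFn ep y (bondSpin ep T * j) = partitionFn ep y j := by
  simp only [partitionFn, potential_bondSpin_mul]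
  exact Equiv.sum_comp (Equiv.addRight T) fun S => Real.exp (potential ep y j S)

lemma gibbs_bondSpin_mul (y j : ι → ℝ) (T : V → Bool) (f : (V → Bool) → ℝ) :
    gibbs ep y (bondSpin ep T * j) f = gibbs ep y j (fun S => f (S + T)) := by
  have h_add_cancel : ∀ S : V → Bool, S + T + T = S := fun S => funext fun v => by
    simp only [Pi.add_apply, add_assoc, BooleanRing.add_self, add_zero]
  simp only [gibbs, partitionFn_bondSpin_mul, potential_bondSpin_mul]
  congr 1
  simpa only [Equiv.coe_addRight, h_add_cancel] using
    Equiv.sum_comp (Equiv.addRight T) fun S => f (S + T) * Real.exp (potential ep y j S)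

lemma gibbs_bondSpin_mul_bondSpin (y j : ι → ℝ) (T : V → Bool) (b : ι) :
    gibbs ep y (bondSpin ep T * j) (bondSpin ep · b) =
      bondSpin ep T b * gibbs ep y j (bondSpin ep · b) := by
  simp only [gibbs_bondSpin_mul, bondSpin_add, mul_comm _ (bondSpin ep T b), gibbs_const_mul]

end Gauge

section Couplings

variable {ι : Type*} [Fintype ι]

instance isProbabilityMeasure_couplings (y : ι → ℝ) : IsProbabilityMeasure (couplings y) :=
  inferInstanceAs (IsProbabilityMeasure (Measure.pi _))

lemma measurePreserving_add_couplings (y : ι → ℝ) :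
    MeasurePreserving (y + ·) (couplings 0) (couplings y) :=
  measurePreserving_pi _ _ fun b =>
    ⟨measurable_const_add _,
      (gaussianReal_map_const_add (y b)).trans (by rw [Pi.zero_apply, zero_add])⟩

lemma quenched_eq_quenched_zero (y : ι → ℝ) (F : (ι → ℝ) → ℝ) :
    quenched y F = quenched 0 fun g => F (y + g) :=
  ((measurePreserving_add_couplings y).integral_comp
    (MeasurableEquiv.addLeft y).measurableEmbedding F).symm

lemma measurePreserving_mul_couplings {σ : ι → ℝ} (hσ : ∀ b, σ b * σ b = 1) (y : ι → ℝ) :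
    MeasurePreserving (σ * ·) (couplings y) (couplings (σ * y)) :=
  measurePreserving_pi _ _ fun b =>
    ⟨measurable_const_mul _, by
      refine (gaussianReal_map_const_mul (σ b)).trans ?_
      congr 1
      ext
      simp [sq, hσ]⟩

lemma quenched_mul {σ : ι → ℝ} (hσ : ∀ b, σ b * σ b = 1) (y : ι → ℝ) (F : (ι → ℝ) → ℝ) :
    quenched (σ * y) F = quenched y fun j => F (σ * j) := by
  have h_involutive : Function.Involutive (σ * ·) := fun j => funext fun b => by
    simp only [Pi.mul_apply, ← mul_assoc, hσ, one_mul]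
  exact ((measurePreserving_mul_couplings hσ y).integral_comp
    (MeasurableEquiv.ofInvolutive (σ * ·) h_involutive (by fun_prop)).measurableEmbedding F).symm

lemma integrable_eval_couplings (y : ι → ℝ) (b : ι) : Integrable (fun j => j b) (couplings y) :=
  integrable_comp_eval (μ := fun b => gaussianReal (y b) 1)
    ((memLp_id_gaussianReal 1).integrable le_rfl)

lemma couplings_eq_withDensity (y : ι → ℝ) :
    couplings y =
      volume.withDensity fun j => ENNReal.ofReal (∏ b, gaussianPDFReal (y b) 1 (j b)) := by
  rw [volume_pi, ← pi_withDensity_ofReal _ (fun b => gaussianPDFReal_nonneg (y b) 1)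
    fun b => integrable_gaussianPDFReal (y b) 1]
  simp only [couplings, gaussianReal_of_var_ne_zero _ one_ne_zero]
  rfl

lemma integrable_couplings_iff {y : ι → ℝ} {F : (ι → ℝ) → ℝ} :
    Integrable F (couplings y) ↔
      Integrable fun j => (∏ b, gaussianPDFReal (y b) 1 (j b)) * F j := by
  rw [couplings_eq_withDensity, integrable_withDensity_iff_integrable_smul' (by fun_prop)
    (.of_forall fun _ => ENNReal.ofReal_lt_top)]
  simp only [ENNReal.toReal_ofReal (Finset.prod_nonneg fun _ _ => gaussianPDFReal_nonneg _ _ _),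
    smul_eq_mul]

lemma quenched_eq_integral_gaussianPDFReal (y : ι → ℝ) (F : (ι → ℝ) → ℝ) :
    quenched y F = ∫ j, (∏ b, gaussianPDFReal (y b) 1 (j b)) * F j := by
  rw [quenched, couplings_eq_withDensity, integral_withDensity_eq_integral_toReal_smul
    (by fun_prop) (.of_forall fun _ => ENNReal.ofReal_lt_top)]
  simp only [ENNReal.toReal_ofReal (Finset.prod_nonneg fun _ _ => gaussianPDFReal_nonneg _ _ _),
    smul_eq_mul]

end Couplings

section Nishimori

variable {V ι : Type*} [Fintype ι] (ep : ι → V × V)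

lemma prod_gaussianPDFReal_bondSpin_mul (y j : ι → ℝ) (T : V → Bool) :
    ∏ b, gaussianPDFReal ((bondSpin ep T * y) b) 1 (j b) =
      (∏ b, gaussianPDFReal 0 1 (j b) * Real.exp (-(y b ^ 2 / 2))) *
        Real.exp (potential ep y j T) := by
  rw [potential, Real.exp_sum, ← Finset.prod_mul_distrib]
  refine Finset.prod_congr rfl fun b _ => ?_
  rw [gaussianPDFReal_eq_centered_mul_exp, mul_assoc, ← Real.exp_add, NNReal.coe_one, div_one,
    Pi.mul_apply, mul_pow, sq (bondSpin ep T b), bondSpin_mul_self]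
  ring_nf

variable [Fintype V] [DecidableEq V]

lemma sum_quenched_gibbs (y : ι → ℝ) {F : (V → Bool) → (ι → ℝ) → ℝ}
    (hF : ∀ T, Integrable (F T) (couplings (bondSpin ep T * y))) :
    ∑ T, quenched (bondSpin ep T * y) (fun j => gibbs ep y j (F · j)) =
      ∑ T, quenched (bondSpin ep T * y) (F T) := by
  set A : (ι → ℝ) → ℝ := fun j => ∏ b, gaussianPDFReal 0 1 (j b) * Real.exp (-(y b ^ 2 / 2))
  set G : (ι → ℝ) → ℝ := fun j => gibbs ep y j (F · j)
  -- `A j * exp U(j, T)` is the density of the couplings given the hidden configuration `T`.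
  simp only [integrable_couplings_iff, prod_gaussianPDFReal_bondSpin_mul] at hF
  have h_joint : ∀ j, ∑ T, A j * Real.exp (potential ep y j T) * F T j =
      A j * (partitionFn ep y j * G j) := fun j => by
    rw [partitionFn_mul_gibbs, Finset.mul_sum]
    exact Finset.sum_congr rfl fun T _ => by ring
  have hG : ∀ T, Integrable fun j => A j * Real.exp (potential ep y j T) * G j := fun T => by
    have h_weight : ∀ j, A j * Real.exp (potential ep y j T) * G j =
        Real.exp (potential ep y j T) / partitionFn ep y j *
          ∑ S, A j * Real.exp (potential ep y j S) * F S j := fun j => by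
      have h_pos := partitionFn_pos ep y j
      rw [h_joint]
      field_simp
    simp only [h_weight]
    refine (integrable_finsetSum _ fun S _ => hF S).bdd_mul (c := 1) ?_ (.of_forall fun j => ?_)
    · exact (Continuous.div (by fun_prop) (by fun_prop)
        fun j => (partitionFn_pos ep y j).ne').aestronglyMeasurable
    · rw [Real.norm_eq_abs, abs_div, Real.abs_exp, abs_of_pos (partitionFn_pos ep y j)]
      exact div_le_one_of_le₀ (exp_potential_le_partitionFn ep y j T) (partitionFn_pos ep y j).le
  simp only [quenched_eq_integral_gaussianPDFReal, prod_gaussianPDFReal_bondSpin_mul]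
  rw [← integral_finsetSum _ fun T _ => hF T, ← integral_finsetSum _ fun T _ => hG T]
  refine integral_congr_ae (.of_forall fun j => ?_)
  change ∑ T, A j * Real.exp (potential ep y j T) * G j =
    ∑ T, A j * Real.exp (potential ep y j T) * F T j
  rw [h_joint, ← Finset.sum_mul, ← Finset.mul_sum, mul_assoc, partitionFn]

lemma integrable_mul_gibbs {z : ι → ℝ} {F : (ι → ℝ) → ℝ} (hF : Integrable F (couplings z))
    (y : ι → ℝ) (f : (V → Bool) → ℝ) :
    Integrable (fun j => F j * gibbs ep y j f) (couplings z) :=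
  hF.mul_bdd (Continuous.aestronglyMeasurable (by fun_prop))
    (.of_forall fun j => abs_gibbs_le ep y j (norm_le_pi_norm f))

lemma integrable_gibbs (y z : ι → ℝ) (f : (V → Bool) → ℝ) :
    Integrable (fun j => gibbs ep y j f) (couplings z) := by
  simpa only [one_mul] using integrable_mul_gibbs ep (integrable_const 1) y f

lemma quenched_gibbs_bondSpin_sq (y : ι → ℝ) (b : ι) :
    quenched y (fun j => gibbs ep y j (bondSpin ep · b) ^ 2) =
      quenched y (fun j => gibbs ep y j (bondSpin ep · b)) := by
  have h_bayes := sum_quenched_gibbs ep y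
    (F := fun T j => gibbs ep y j (bondSpin ep · b) * bondSpin ep T b)
    fun T => (integrable_gibbs ep y _ _).mul_const _
  have h_gauge : ∀ T j, bondSpin ep T b * gibbs ep y j (bondSpin ep · b) * bondSpin ep T b =
      gibbs ep y j (bondSpin ep · b) := fun T j => by
    rw [mul_right_comm, bondSpin_mul_self, one_mul]
  simp only [gibbs_const_mul, quenched_mul (bondSpin_mul_self ep _), gibbs_bondSpin_mul_bondSpin,
    h_gauge, ← mul_assoc, Finset.sum_const, Finset.card_univ] at h_bayes
  simpa only [sq] using smul_right_injective ℝ Fintype.card_ne_zero h_bayes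

end Nishimori

section Pressure

variable {V ι : Type*} [Fintype V] [DecidableEq V] [Fintype ι] (ep : ι → V × V)

lemma quenched_sub_mul_gibbs_bondSpin (y : ι → ℝ) (b : ι) :
    quenched y (fun j => (j b - y b) * gibbs ep y j (bondSpin ep · b)) =
      y b * (1 - quenched y (fun j => gibbs ep y j (bondSpin ep · b))) := by
  classical
  have h_deriv : ∀ a t, HasDerivAt
      (fun t => gibbs ep y (Function.update a b t) (bondSpin ep · b))
      (y b * (1 - gibbs ep y (Function.update a b t) (bondSpin ep · b) ^ 2)) t := fun a t => by
    simpa only [bondSpin_mul_self, gibbs_one, sq] using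
      hasDerivAt_gibbs_update ep y a b t (bondSpin ep · b)
  have h_int := integrable_gibbs ep y y (bondSpin ep · b)
  have h_sq_int : Integrable (fun j => gibbs ep y j (bondSpin ep · b) ^ 2) (couplings y) := by
    simpa only [sq] using integrable_mul_gibbs ep h_int y _
  have h_stein := stein_identity_pi_gaussianReal (m := y) (v := fun _ => 1) b h_deriv h_int
    (((integrable_const 1).sub h_sq_int).const_mul (y b))
    (integrable_mul_gibbs ep ((integrable_eval_couplings y b).sub (integrable_const (y b))) y _)
  rw [NNReal.coe_one, one_mul, integral_const_mul] at h_stein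
  rw [← quenched_gibbs_bondSpin_sq]
  refine h_stein.trans (congrArg (y b * ·) ?_)
  exact (integral_sub (integrable_const 1) h_sq_int).trans (by simp [quenched])

lemma quenched_add_mul_gibbs_bondSpin (y : ι → ℝ) (b : ι) :
    quenched y (fun j => (j b + y b) * gibbs ep y j (bondSpin ep · b)) =
      y b * (1 + quenched y (fun j => gibbs ep y j (bondSpin ep · b))) := by
  have h_int := integrable_gibbs ep y y (bondSpin ep · b)
  have h_sub_int : Integrable (fun j => (j b - y b) * gibbs ep y j (bondSpin ep · b))
      (couplings y) :=
    integrable_mul_gibbs ep ((integrable_eval_couplings y b).sub (integrable_const (y b))) y _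
  calc quenched y (fun j => (j b + y b) * gibbs ep y j (bondSpin ep · b))
    _ = quenched y (fun j => (j b - y b) * gibbs ep y j (bondSpin ep · b) +
          2 * y b * gibbs ep y j (bondSpin ep · b)) := by
        congr 1
        funext j
        ring
    _ = quenched y (fun j => (j b - y b) * gibbs ep y j (bondSpin ep · b)) +
          2 * y b * quenched y (fun j => gibbs ep y j (bondSpin ep · b)) :=
        (integral_add h_sub_int (h_int.const_mul _)).trans (by rw [integral_const_mul]; rfl)
    _ = y b * (1 + quenched y (fun j => gibbs ep y j (bondSpin ep · b))) := by
        rw [quenched_sub_mul_gibbs_bondSpin]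
        ring

lemma quenched_gibbs_finsetSum_const_mul {κ : Type*} (y : ι → ℝ) (s : Finset κ) (c : κ → ℝ)
    (f : κ → (V → Bool) → ℝ) :
    quenched y (fun j => gibbs ep y j fun S => ∑ k ∈ s, c k * f k S) =
      ∑ k ∈ s, c k * quenched y (fun j => gibbs ep y j (f k)) := by
  simp only [gibbs_finsetSum ep y _ s fun k S => c k * f k S, gibbs_const_mul, quenched]
  rw [integral_finsetSum _ fun k _ => (integrable_gibbs ep y y (f k)).const_mul (c k)]
  simp only [integral_const_mul]

lemma integrable_log_partitionFn (y z : ι → ℝ) :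
    Integrable (fun j => Real.log (partitionFn ep y j)) (couplings z) :=
  .mono' ((integrable_const _).add (integrable_finsetSum Finset.univ fun b _ =>
    ((integrable_eval_couplings z b).const_mul (y b)).abs))
    (Continuous.aestronglyMeasurable (by fun_prop))
    (.of_forall fun j => abs_log_partitionFn_le ep y j)

lemma continuous_quenched_gibbs (f : (V → Bool) → ℝ) :
    Continuous fun y => quenched y fun j => gibbs ep y j f := by
  simp only [quenched_eq_quenched_zero _ fun j => gibbs ep _ j f]
  exact continuous_of_dominated (fun y => Continuous.aestronglyMeasurable (by fun_prop))
    (fun y => .of_forall fun g => abs_gibbs_le ep y (y + g) (norm_le_pi_norm f))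
    (integrable_const _) (.of_forall fun g => by fun_prop)

lemma hasFDerivAt_log_partitionFn_add (g z : ι → ℝ) :
    HasFDerivAt (fun z => Real.log (partitionFn ep z (z + g)))
      (∑ b, (((z + g) b + z b) * gibbs ep z (z + g) (bondSpin ep · b)) •
        ContinuousLinearMap.proj (R := ℝ) (φ := fun _ : ι => ℝ) b) z := by
  have h_coord : ∀ b, HasFDerivAt (fun z : ι → ℝ => z b * (z + g) b)
      (((z + g) b + z b) • ContinuousLinearMap.proj (R := ℝ) (φ := fun _ : ι => ℝ) b) z :=
    fun b => ((hasFDerivAt_apply b z).fun_mul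
      ((hasFDerivAt_apply b z).add_const (g b))).congr_fderiv (by
        rw [Pi.add_apply]; module)
  refine (hasFDerivAt_log_partitionFn ep h_coord).congr_fderiv ?_
  simp only [smul_smul, mul_comm]

lemma abs_add_mul_gibbs_bondSpin_le (g z : ι → ℝ) (b : ι) :
    |((z + g) b + z b) * gibbs ep z (z + g) (bondSpin ep · b)| ≤ |g b| + 2 * |z b| := by
  rw [abs_mul]
  refine (mul_le_of_le_one_right (abs_nonneg _) (abs_gibbs_bondSpin_le_one ep _ _ b)).trans ?_
  rw [show (z + g) b + z b = g b + 2 * z b by rw [Pi.add_apply]; ring]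
  exact (abs_add_le _ _).trans_eq (by rw [abs_mul, abs_two])

lemma hasFDerivAt_pressure (y : ι → ℝ) :
    HasFDerivAt (pressure ep)
      (∑ b, (y b * (1 + quenched y fun j => gibbs ep y j (bondSpin ep · b))) •
        ContinuousLinearMap.proj (R := ℝ) (φ := fun _ : ι => ℝ) b) y := by
  have h_near : ∀ z ∈ Metric.ball y 1, ∀ b, |z b| ≤ |y b| + 1 := fun z hz b => by
    have h_dist : |z b - y b| ≤ 1 :=
      (norm_le_pi_norm (z - y) b).trans (mem_ball_iff_norm.1 hz).le
    linarith [abs_sub_abs_le_abs_sub (z b) (y b)]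
  -- Centring the couplings moves the parameters from the measure into the integrand.
  have h_fderiv := hasFDerivAt_integral_of_dominated_of_fderiv_le (μ := couplings (0 : ι → ℝ))
    (F := fun z g => Real.log (partitionFn ep z (z + g))) (x₀ := y)
    (bound := fun g => ∑ b, (|g b| + 2 * (|y b| + 1)))
    (Metric.ball_mem_nhds y one_pos)
    (.of_forall fun z => Continuous.aestronglyMeasurable (by fun_prop))
    ((measurePreserving_add_couplings y).integrable_comp_of_integrable
      (integrable_log_partitionFn ep y y))
    (Continuous.aestronglyMeasurable (by fun_prop))
    (.of_forall fun g z hz => (norm_sum_smul_proj_le _).trans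
      (Finset.sum_le_sum fun b _ => (abs_add_mul_gibbs_bondSpin_le ep g z b).trans
        (by gcongr; exact h_near z hz b)))
    (integrable_finsetSum _ fun b _ =>
      (integrable_eval_couplings 0 b).abs.add (integrable_const _))
    (.of_forall fun g z _ => hasFDerivAt_log_partitionFn_add ep g z)
  refine (h_fderiv.congr_fderiv ?_).congr_of_eventuallyEq
    (.of_forall fun z => quenched_eq_quenched_zero z _)
  have h_int : ∀ b, Integrable (fun g => ((y + g) b + y b) * gibbs ep y (y + g) (bondSpin ep · b))
      (couplings 0) := fun b =>
    (measurePreserving_add_couplings y).integrable_comp_of_integrable (integrable_mul_gibbs ep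
      ((integrable_eval_couplings y b).add (integrable_const (y b))) y _)
  rw [integral_finsetSum _ fun b _ => (h_int b).smul_const _]
  refine Finset.sum_congr rfl fun b _ => ?_
  rw [integral_smul_const, ← quenched_add_mul_gibbs_bondSpin, quenched_eq_quenched_zero, quenched]

end Pressure

section Corridor

variable {ι : Type*} [DecidableEq ι]

/-- The path of parameters of the corridor interpolation: the parameter of a bond of the corridor
`C` is scaled by `√t`, which removes the bond at `t = 0` and restores it at `t = 1`. -/
def corridorParam (x : ι → ℝ) (C : Finset ι) (t : ℝ) : ι → ℝ :=
  fun b => if b ∈ C then x b * √t else x b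

lemma continuous_corridorParam (x : ι → ℝ) (C : Finset ι) : Continuous (corridorParam x C) :=
  continuous_pi fun b => by
    unfold corridorParam
    split_ifs <;> fun_prop

lemma hasDerivAt_corridorParam (x : ι → ℝ) (C : Finset ι) {t : ℝ} (ht : 0 < t) :
    HasDerivAt (corridorParam x C) (fun b => if b ∈ C then x b / (2 * √t) else 0) t :=
  hasDerivAt_pi.2 fun b => by
    unfold corridorParam
    split_ifs
    · simpa only [mul_one_div] using (Real.hasDerivAt_sqrt ht.ne').const_mul (x b)
    · exact hasDerivAt_const t (x b)

variable {V : Type*} [Fintype V] [DecidableEq V] [Fintype ι] (ep : ι → V × V)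

lemma hasDerivAt_pressure_corridorParam (x : ι → ℝ) (C : Finset ι) {t : ℝ} (ht : 0 < t) :
    HasDerivAt (fun t => pressure ep (corridorParam x C t))
      (1 / 2 * (∑ b ∈ C, x b ^ 2 + quenched (corridorParam x C t) fun j =>
        gibbs ep (corridorParam x C t) j fun S => ∑ b ∈ C, x b ^ 2 * bondSpin ep S b)) t := by
  refine ((hasFDerivAt_pressure ep _).comp_hasDerivAt t
    (hasDerivAt_corridorParam x C ht)).congr_deriv ?_
  have h_sqrt : √t ≠ 0 := (Real.sqrt_pos.2 ht).ne'
  rw [quenched_gibbs_finsetSum_const_mul ep _ C (fun b => x b ^ 2) fun b S => bondSpin ep S b,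
    ← Finset.sum_add_distrib, Finset.mul_sum]
  simp only [sum_apply, smul_apply, ContinuousLinearMap.proj_apply, smul_eq_mul, mul_ite,
    mul_zero, Finset.sum_ite_mem, Finset.univ_inter]
  refine Finset.sum_congr rfl fun b hb => ?_
  rw [show corridorParam x C t b = x b * √t from if_pos hb]
  field_simp

theorem corridor_integral_representation_general (x : ι → ℝ) (C : Finset ι) :
    pressure ep (corridorParam x C 1) - pressure ep (corridorParam x C 0) =
      1 / 2 * (∑ b ∈ C, x b ^ 2 + ∫ t in (0 : ℝ)..1, quenched (corridorParam x C t) fun j =>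
        gibbs ep (corridorParam x C t) j fun S => ∑ b ∈ C, x b ^ 2 * bondSpin ep S b) := by
  have h_pressure : Continuous (pressure ep) :=
    continuous_iff_continuousAt.2 fun y => (hasFDerivAt_pressure ep y).continuousAt
  have h_param := continuous_corridorParam x C
  have h_gibbs : Continuous fun t => quenched (corridorParam x C t) fun j =>
      gibbs ep (corridorParam x C t) j fun S => ∑ b ∈ C, x b ^ 2 * bondSpin ep S b :=
    (continuous_quenched_gibbs ep _).comp h_param
  refine (intervalIntegral.integral_eq_sub_of_hasDerivAt_of_le zero_le_one
    (h_pressure.comp h_param).continuousOn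
    (fun t ht => hasDerivAt_pressure_corridorParam ep x C ht.1)
    ((continuous_const.mul (continuous_const.add h_gibbs)).intervalIntegrable 0 1)).symm.trans ?_
  rw [intervalIntegral.integral_const_mul,
    intervalIntegral.integral_add (by simp) (h_gibbs.intervalIntegrable 0 1)]
  simp

end Corridor

/-- Integral representation of the corridor term: with `x_b(t) = x√t` for
`b ∈ C`, `x_b(t) = x` otherwise, and `P(t)` the quenched pressure at parameters `{x_b(t)}`,
`P(1) − P(0) = |C| (x²/2) (1 + ∫₀¹ [⟨S_C⟩_t]_t dt)`, where
`S_C = |C|⁻¹ Σ_{b∈C} S_b`. -/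
theorem corridor_integral_representation
    {V ι : Type*} [Fintype V] [DecidableEq V] [Fintype ι] [DecidableEq ι]
    (ep : ι → V × V) (hep : ∀ b, (ep b).1 ≠ (ep b).2)
    (x : ℝ) (hx : 0 < x) (C : Finset ι) :
    pressure ep (fun b => if b ∈ C then x * Real.sqrt 1 else x) -
        pressure ep (fun b => if b ∈ C then x * Real.sqrt 0 else x) =
      (C.card : ℝ) * (x ^ 2 / 2) *
        (1 + ∫ t in (0 : ℝ)..1,
          quenched (fun b => if b ∈ C then x * Real.sqrt t else x)
            (fun j => gibbs ep (fun b => if b ∈ C then x * Real.sqrt t else x) j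
              (fun S => (C.card : ℝ)⁻¹ * ∑ b ∈ C, bondSpin ep S b))) := by
  refine (corridor_integral_representation_general ep (fun _ => x) C).trans ?_
  unfold corridorParam
  simp only [← Finset.mul_sum, gibbs_const_mul, quenched, integral_const_mul,
    intervalIntegral.integral_const_mul, Finset.sum_const, nsmul_eq_mul]
  obtain rfl | hC := C.eq_empty_or_nonempty
  · simp [gibbs]
  · field_simp

end
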